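/- arXiv:2503.05428 — 2 statements merged into one kernel-verified Lean document; each statement's English description precedes it below -/
import Mathlib

section
/- Let ξ ∈ ℝ³ be nonzero. If λ ∈ σ_pt(ξ), then λ = 0 or λ² = −(4Ω_ξ² + N²·|P_ξ^⊥ĝ|²), where |P_ξ^⊥ĝ|² = 1 − (ξ·ĝ)²/|ξ|². (In particular, λ = ±i√(4Ω_ξ² + N²|P_ξ^⊥ĝ|²) when the quantity under the root is nonnegative.) -/
/-!
On the complex plane `ξ^⊥` the map is `T = λ² + 2λ c J + N² p pᵀ`, where `J = ξ × ·`,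
`c = (ξ·Ω)/|ξ|²` and `p = P_ξ^⊥ ĝ`; its determinant is `λ² (λ² + 4 c² |ξ|² + N² |p|²)`.
Rank less than two makes the kernel at least two-dimensional, so it contains a nonzero `η ⊥ ξ`
(`exists_ker_perp`). Applying the adjugate of `T` to `T η = 0` gives `det T • η = 0`
(`adjugate_identity`), hence `det T = 0`.
-/

open Matrix

noncomputable section

abbrev V3R : Type := Fin 3 → ℝ
abbrev V3C : Type := Fin 3 → ℂ

/-- Embedding of real 3-vectors into complex 3-vectors. -/
def toC (v : V3R) : V3C := fun i => (v i : ℂ)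

/-- The Euclidean norm of a real 3-vector. -/
def nrm (v : V3R) : ℝ := Real.sqrt (v ⬝ᵥ v)

/-- The `ℂ`-linear functional `η ↦ v ⬝ᵥ η` (ℂ-bilinear dot product with `v`). -/
def dotL (v : V3C) : V3C →ₗ[ℂ] ℂ where
  toFun η := v ⬝ᵥ η
  map_add' x y := by simp [dotProduct_add]
  map_smul' c x := by simp [dotProduct_smul]

/-- The projection `P_ξ^⊥ : ℂ³ → ℂ³`, `η ↦ η - |ξ|⁻² (ξ·η) ξ`. -/
def PperpL (ξ : V3R) : V3C →ₗ[ℂ] V3C :=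
  LinearMap.id - ((((ξ ⬝ᵥ ξ : ℝ) : ℂ)⁻¹ • dotL (toC ξ)).smulRight (toC ξ))

/-- The map `η ↦ λ² P_ξ^⊥ η + 2λ P_ξ^⊥(Ω × P_ξ^⊥ η) + N² (ĝ · P_ξ^⊥ η) P_ξ^⊥ ĝ`,
where the cross product is extended ℂ-bilinearly. -/
def Vop (Ω g : V3R) (N2 : ℝ) (ξ : V3R) (l : ℂ) : V3C →ₗ[ℂ] V3C :=
  l ^ 2 • PperpL ξ
    + (2 * l) • (PperpL ξ ∘ₗ (crossProduct (toC Ω) : V3C →ₗ[ℂ] V3C) ∘ₗ PperpL ξ)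
    + (N2 : ℂ) • ((dotL (toC g) ∘ₗ PperpL ξ).smulRight (PperpL ξ (toC g)))

/-- `σ_pt(ξ)`: the set of `λ ∈ ℂ` for which the above map has rank strictly less than two. -/
def sigmaPt (Ω g : V3R) (N2 : ℝ) (ξ : V3R) : Set ℂ :=
  {l : ℂ | LinearMap.rank (Vop Ω g N2 ξ l) < 2}

/-- A kernel of dimension at least two in `ℂ³` meets every plane `v^⊥` nontrivially. -/
lemma exists_ker_perp (f : V3C →ₗ[ℂ] V3C) (hf : LinearMap.rank f < 2) (v : V3C) :
    ∃ η : V3C, η ≠ 0 ∧ f η = 0 ∧ v ⬝ᵥ η = 0 := by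
  have hr : Module.finrank ℂ (LinearMap.range f) < 2 := by
    have h : Module.rank ℂ (LinearMap.range f) < 2 := hf
    rw [← Module.finrank_eq_rank] at h
    exact_mod_cast h
  have hsum := f.finrank_range_add_finrank_ker
  have h3 : Module.finrank ℂ V3C = 3 := by simp
  have hk : Module.finrank ℂ ℂ < Module.finrank ℂ (LinearMap.ker f) := by
    rw [Module.finrank_self]; omega
  have hne := LinearMap.ker_ne_bot_of_finrank_lt (f := (dotL v).domRestrict (LinearMap.ker f)) hk
  obtain ⟨x, hx, hx0⟩ := (Submodule.ne_bot_iff _).1 hne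
  exact ⟨x, fun h => hx0 (Subtype.ext h), x.2, hx⟩

lemma PperpL_apply (ξ : V3R) (η : V3C) :
    PperpL ξ η = η - (((ξ ⬝ᵥ ξ : ℝ) : ℂ)⁻¹ * (toC ξ ⬝ᵥ η)) • toC ξ := by
  simp [PperpL, dotL]

/-- For `η ⊥ ξ`, only the component of `Ω` along `ξ` survives in `P_ξ^⊥ (Ω × η)`: the other
component contributes a multiple of `ξ`. -/
lemma proj_cross (x o η : V3C) (s : ℂ) (hs : s ≠ 0) (hxs : x ⬝ᵥ x = s) (hη : x ⬝ᵥ η = 0) :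
    crossProduct o η - (s⁻¹ * (x ⬝ᵥ crossProduct o η)) • x
      = (s⁻¹ * (x ⬝ᵥ o)) • crossProduct x η := by
  have key : s • crossProduct o η - (x ⬝ᵥ crossProduct o η) • x
      = (x ⬝ᵥ o) • crossProduct x η := by
    subst hxs
    simp only [cross_apply, dotProduct, Fin.sum_univ_three] at hη ⊢
    ext i
    fin_cases i <;> simp
    · linear_combination -(x 1 * o 2 - x 2 * o 1) * hη
    · linear_combination -(x 2 * o 0 - x 0 * o 2) * hη
    · linear_combination -(x 0 * o 1 - x 1 * o 0) * hη
  have h := congrArg (fun v => s⁻¹ • v) key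
  simpa [smul_sub, smul_smul, hs] using h

/-- If `x ⊥ p, η` and `T η = l² η + 2 l c (x × η) + m (p·η) p` vanishes, then `det T • η = 0`.
The proof applies to this equation the adjugate
`(l² + m |p|²) - 2 l c (x × ·) - m p pᵀ` of `T` on `x^⊥`, coordinate by coordinate. -/
lemma adjugate_identity (x p η : V3C) (l c m : ℂ) (hp : x ⬝ᵥ p = 0) (hη : x ⬝ᵥ η = 0)
    (h : l ^ 2 • η + (2 * l * c) • crossProduct x η + (m * (p ⬝ᵥ η)) • p = 0) :
    (l ^ 2 * (l ^ 2 + 4 * c ^ 2 * (x ⬝ᵥ x) + m * (p ⬝ᵥ p))) • η = 0 := by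
  have h0 := congrFun h 0
  have h1 := congrFun h 1
  have h2 := congrFun h 2
  simp only [cross_apply, dotProduct, Fin.sum_univ_three] at hη hp h0 h1 h2 ⊢
  simp [vecHead, vecTail] at h0 h1 h2
  ext i
  fin_cases i <;> simp only [Pi.smul_apply, smul_eq_mul, Pi.zero_apply, Fin.zero_eta, Fin.mk_one,
    Fin.reduceFinMk]
  · linear_combination (l ^ 2 + m * (p 0 * p 0 + p 1 * p 1 + p 2 * p 2)) * h0
      - 2 * l * c * (x 1 * h2 - x 2 * h1) - m * p 0 * (p 0 * h0 + p 1 * h1 + p 2 * h2)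
      + 4 * l ^ 2 * c ^ 2 * x 0 * hη - 2 * l * c * m * (p 1 * η 2 - p 2 * η 1) * hp
  · linear_combination (l ^ 2 + m * (p 0 * p 0 + p 1 * p 1 + p 2 * p 2)) * h1
      - 2 * l * c * (x 2 * h0 - x 0 * h2) - m * p 1 * (p 0 * h0 + p 1 * h1 + p 2 * h2)
      + 4 * l ^ 2 * c ^ 2 * x 1 * hη - 2 * l * c * m * (p 2 * η 0 - p 0 * η 2) * hp
  · linear_combination (l ^ 2 + m * (p 0 * p 0 + p 1 * p 1 + p 2 * p 2)) * h2
      - 2 * l * c * (x 0 * h1 - x 1 * h0) - m * p 2 * (p 0 * h0 + p 1 * h1 + p 2 * h2)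
      + 4 * l ^ 2 * c ^ 2 * x 2 * hη - 2 * l * c * m * (p 0 * η 1 - p 1 * η 0) * hp

lemma toC_dot (v w : V3R) : toC v ⬝ᵥ toC w = ((v ⬝ᵥ w : ℝ) : ℂ) := by
  simp [toC, dotProduct]

/-- If `λ ∈ σ_pt(ξ)` then `λ = 0` or `λ² = -(4 Ω_ξ² + N² |P_ξ^⊥ ĝ|²)`,
where `Ω_ξ = (ξ·Ω)/|ξ|` and `|P_ξ^⊥ ĝ|² = 1 - (ξ·ĝ)²/|ξ|²`. -/
theorem statement0 (Ω g : V3R) (hg : g ⬝ᵥ g = 1) (N2 : ℝ) (ξ : V3R) (hξ : ξ ≠ 0)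
    (l : ℂ) (hl : l ∈ sigmaPt Ω g N2 ξ) :
    l = 0 ∨ l ^ 2 =
      -(((4 * ((ξ ⬝ᵥ Ω) / nrm ξ) ^ 2 + N2 * (1 - (ξ ⬝ᵥ g) ^ 2 / nrm ξ ^ 2) : ℝ) : ℂ)) := by
  have hs : ξ ⬝ᵥ ξ ≠ 0 := fun h => hξ (dotProduct_self_eq_zero.1 h)
  have hn : nrm ξ ^ 2 = ξ ⬝ᵥ ξ :=
    Real.sq_sqrt (by simpa [dotProduct] using Finset.sum_nonneg fun i _ => mul_self_nonneg (ξ i))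
  have hsC : ((ξ ⬝ᵥ ξ : ℝ) : ℂ) ≠ 0 := by exact_mod_cast hs
  obtain ⟨η, hη0, hker, hη⟩ := exists_ker_perp _ hl (toC ξ)
  have hPη : PperpL ξ η = η := by simp [PperpL_apply, hη]
  have hcross : PperpL ξ (crossProduct (toC Ω) η) = _ :=
    (PperpL_apply _ _).trans (proj_cross (toC ξ) (toC Ω) η _ hsC (toC_dot ξ ξ) hη)
  have hPg := PperpL_apply ξ (toC g)
  have hp : toC ξ ⬝ᵥ PperpL ξ (toC g) = 0 := by
    rw [hPg, dotProduct_sub, dotProduct_smul, toC_dot, toC_dot, smul_eq_mul]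
    field_simp
    ring
  have hpη : PperpL ξ (toC g) ⬝ᵥ η = toC g ⬝ᵥ η := by
    rw [hPg, sub_dotProduct, smul_dotProduct, hη, smul_zero, sub_zero]
  have hpp : PperpL ξ (toC g) ⬝ᵥ PperpL ξ (toC g)
      = 1 - ((ξ ⬝ᵥ g : ℝ) : ℂ) ^ 2 / ((ξ ⬝ᵥ ξ : ℝ) : ℂ) := by
    conv_lhs => arg 1; rw [hPg]
    rw [sub_dotProduct, smul_dotProduct, hp, smul_zero, sub_zero, hPg, dotProduct_sub,
      dotProduct_smul, dotProduct_comm (toC g) (toC ξ), toC_dot, toC_dot, hg, smul_eq_mul]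
    push_cast
    ring
  have hT : l ^ 2 • η
      + (2 * l * (((ξ ⬝ᵥ ξ : ℝ) : ℂ)⁻¹ * (toC ξ ⬝ᵥ toC Ω))) • crossProduct (toC ξ) η
      + ((N2 : ℂ) * (PperpL ξ (toC g) ⬝ᵥ η)) • PperpL ξ (toC g) = 0 := by
    rw [← hker, hpη, mul_smul (2 * l), ← hcross]
    simp [Vop, hPη, dotL, smul_smul]
  have hdet := adjugate_identity _ _ _ _ _ _ hp hη hT
  rw [smul_eq_zero, or_iff_left hη0, mul_eq_zero] at hdet
  rcases hdet with h | h
  · exact Or.inl (pow_eq_zero_iff two_ne_zero |>.1 h)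
  · right
    rw [hpp, toC_dot, toC_dot] at h
    rw [div_pow, hn]
    push_cast
    rw [← sub_eq_zero, ← h]
    field_simp
    ring
end
end

section
/- If N² ≥ 0, then β₋ ≤ N² ≤ β₊. -/
open Matrix

noncomputable section

/-- `β₊ = ½(4|Ω|² + N² + √((N² + 4|Ω|²)² − 16(Ω·ĝ)² N²))`. -/
def betaP (Ω g : V3R) (N2 : ℝ) : ℝ :=
  (4 * (Ω ⬝ᵥ Ω) + N2 + Real.sqrt ((N2 + 4 * (Ω ⬝ᵥ Ω)) ^ 2 - 16 * (Ω ⬝ᵥ g) ^ 2 * N2)) / 2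

/-- `β₋ = ½(4|Ω|² + N² − √((N² + 4|Ω|²)² − 16(Ω·ĝ)² N²))`. -/
def betaM (Ω g : V3R) (N2 : ℝ) : ℝ :=
  (4 * (Ω ⬝ᵥ Ω) + N2 - Real.sqrt ((N2 + 4 * (Ω ⬝ᵥ Ω)) ^ 2 - 16 * (Ω ⬝ᵥ g) ^ 2 * N2)) / 2

/-- If `N² ≥ 0`, then `β₋ ≤ N² ≤ β₊`. -/
theorem statement17 (Ω g : V3R) (hg : g ⬝ᵥ g = 1) (N2 : ℝ) (hN : 0 ≤ N2) :
    betaM Ω g N2 ≤ N2 ∧ N2 ≤ betaP Ω g N2 := by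
  have hCS : (Ω ⬝ᵥ g) ^ 2 ≤ Ω ⬝ᵥ Ω := by
    have h : (Ω ⬝ᵥ g) ^ 2 ≤ (Ω ⬝ᵥ Ω) * (g ⬝ᵥ g) := by
      simp only [dotProduct, Fin.sum_univ_three]
      -- Lagrange's identity: the difference of the two sides is `|Ω × g|²`.
      nlinarith [sq_nonneg (Ω 0 * g 1 - Ω 1 * g 0), sq_nonneg (Ω 0 * g 2 - Ω 2 * g 0),
        sq_nonneg (Ω 1 * g 2 - Ω 2 * g 1)]
    rwa [hg, mul_one] at h
  -- Both bounds say `|4|Ω|² - N²| ≤ √D`; indeed `D - (4|Ω|² - N²)² = 16 N² (|Ω|² - (Ω·ĝ)²)`.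
  have hD : |4 * (Ω ⬝ᵥ Ω) - N2| ≤
      Real.sqrt ((N2 + 4 * (Ω ⬝ᵥ Ω)) ^ 2 - 16 * (Ω ⬝ᵥ g) ^ 2 * N2) :=
    Real.abs_le_sqrt (by nlinarith [mul_nonneg hN (sub_nonneg.2 hCS)])
  obtain ⟨h₁, h₂⟩ := abs_le.1 hD
  unfold betaM betaP
  constructor <;> linarith
end
end
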